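/- Let 𝒫 = (P, μ, σ) be an n-dimensional system and for T ≥ 0 let u_T^can denote the μ-canonical distribution of temperature T. Then the function T ↦ F_𝒫(T, u_T^can) is increasing and concave on [0,∞), the functions T ↦ U_𝒫(u_T^can) and T ↦ S_𝒫(u_T^can) are increasing on [0,∞), and lim_{T→∞} S_𝒫(u_T^can) = 0. -/

import Mathlib

open MeasureTheory Filter Topology
open scoped ENNReal NNReal

noncomputable section

abbrev Euc (n : ℕ) := EuclideanSpace ℝ (Fin n)

/-- A `[0,∞]`-valued function on a set `K ⊆ ℝⁿ` is convex if
`u((1−t)x+ty) ≤ (1−t)u(x)+t·u(y)` in `[0,∞]` for all `x, y ∈ K` and `t ∈ [0,1]`. -/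
def ConvexFnOn {n : ℕ} (K : Set (Euc n)) (u : Euc n → ℝ≥0∞) : Prop :=
  ∀ ⦃x⦄, x ∈ K → ∀ ⦃y⦄, y ∈ K → ∀ ⦃t : ℝ⦄, 0 ≤ t → t ≤ 1 →
    u ((1 - t) • x + t • y) ≤ ENNReal.ofReal (1 - t) * u x + ENNReal.ofReal t * u y

/-- A polytope: a compact set with nonempty interior which is a finite
intersection of closed half-spaces (cut out by nonzero affine functions). -/
def IsPolytope {n : ℕ} (P : Set (Euc n)) : Prop :=
  IsCompact P ∧ (interior P).Nonempty ∧
    ∃ (m : ℕ) (L : Fin m → (Euc n →ᵃ[ℝ] ℝ)),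
      (∀ k, L k ≠ 0) ∧ P = ⋂ k, {x | 0 ≤ L k x}

/-- `F` is a face of `P`: the intersection of `P` with the zero locus of a
nonzero affine function that is nonnegative on `P`. -/
def IsFaceOf {n : ℕ} (P F : Set (Euc n)) : Prop :=
  ∃ ℓ : Euc n →ᵃ[ℝ] ℝ, ℓ ≠ 0 ∧ (∀ y ∈ P, 0 ≤ ℓ y) ∧ F = {y ∈ P | ℓ y = 0}

/-- A facet: a face spanning an affine subspace of dimension `n − 1`. -/
def IsFacetOf {n : ℕ} (P F : Set (Euc n)) : Prop :=
  IsFaceOf P F ∧ Module.finrank ℝ (vectorSpan ℝ F) + 1 = n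

/-- A simple polytope: every vertex lies on exactly `n` facets. -/
def IsSimplePolytope {n : ℕ} (P : Set (Euc n)) : Prop :=
  IsPolytope P ∧ ∀ v : Euc n, IsFaceOf P {v} →
    {F : Set (Euc n) | IsFacetOf P F ∧ v ∈ F}.ncard = n

/-- An `n`-dimensional system `𝒫 = (P, μ, σ)`: a simple polytope `P ⊆ ℝⁿ`, a flat
measure `μ` on `P` (a positive constant multiple of Lebesgue measure restricted
to `P`), and a flat measure `σ` on `∂P` (supported on the boundary and, on each
facet, a positive constant multiple of `(n−1)`-dimensional Hausdorff measure). -/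
structure NSystem (n : ℕ) where
  P : Set (Euc n)
  μ : Measure (Euc n)
  σ : Measure (Euc n)
  simple : IsSimplePolytope P
  flat : ∃ c : ℝ, 0 < c ∧ μ = ENNReal.ofReal c • volume.restrict P
  bdry_supp : σ (frontier P)ᶜ = 0
  flat_bdry : ∀ F : Set (Euc n), IsFacetOf P F →
    ∃ c : ℝ, 0 < c ∧ σ.restrict F =
      ENNReal.ofReal c • (Measure.hausdorffMeasure ((n : ℝ) - 1)).restrict F

/-- `y log y`, computed via the real value of `y ∈ [0,∞]`. -/
def xlogx (y : ℝ≥0∞) : ℝ := y.toReal * Real.log y.toReal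

/-- `∫_A u log u dμ ∈ (−∞, ∞]`, as an extended real number. -/
def entOn {n : ℕ} (μ : Measure (Euc n)) (A : Set (Euc n)) (u : Euc n → ℝ≥0∞) : EReal :=
  ((∫⁻ x in A, ENNReal.ofReal (xlogx (u x)) ∂μ : ℝ≥0∞) : EReal)
    - ((∫⁻ x in A, ENNReal.ofReal (-(xlogx (u x))) ∂μ : ℝ≥0∞) : EReal)

/-- `u : P → (0,∞]` is log-convex: `u((1−t)x+ty) ≤ u(x)^{1−t} u(y)^t`. -/
def LogConvexOn {n : ℕ} (P : Set (Euc n)) (u : Euc n → ℝ≥0∞) : Prop :=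
  ∀ ⦃x⦄, x ∈ P → ∀ ⦃y⦄, y ∈ P → ∀ ⦃t : ℝ⦄, 0 ≤ t → t ≤ 1 →
    u ((1 - t) • x + t • y) ≤ u x ^ (1 - t) * u y ^ t

/-- `ℳ^{exp,p}(P)`: lower semi-continuous log-convex `u : P → (0,∞]` with
`∫_P u dμ = μ(P)` and `∫_P u^p dμ < ∞`. -/
def MExp {n : ℕ} (S : NSystem n) (p : ℝ) : Set (Euc n → ℝ≥0∞) :=
  {u | LowerSemicontinuousOn u S.P ∧ (∀ x ∈ S.P, 0 < u x) ∧ LogConvexOn S.P u ∧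
    (∫⁻ x in S.P, u x ∂S.μ) = S.μ S.P ∧ (∫⁻ x in S.P, u x ^ p ∂S.μ) < ⊤}

/-- The nonequilibrium entropy `S_𝒫(u) = −(1/μ(P)) ∫_P u log u dμ ∈ [−∞, 0]`. -/
def Spf {n : ℕ} (S : NSystem n) (u : Euc n → ℝ≥0∞) : EReal :=
  (((S.μ S.P).toReal⁻¹ : ℝ) : EReal) *
    (((∫⁻ x in S.P, ENNReal.ofReal (-(xlogx (u x))) ∂S.μ : ℝ≥0∞) : EReal)
      - ((∫⁻ x in S.P, ENNReal.ofReal (xlogx (u x)) ∂S.μ : ℝ≥0∞) : EReal))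

/-- The internal μ-energy `U_𝒫(u) = (1/μ(P)) ∫_{∂P} u dσ ∈ (0, ∞]`. -/
def Upf {n : ℕ} (S : NSystem n) (u : Euc n → ℝ≥0∞) : ℝ≥0∞ :=
  (S.μ S.P)⁻¹ * ∫⁻ x in frontier S.P, u x ∂S.σ

/-- The free μ-energy `F_𝒫(T,u) = U_𝒫(u) − T·S_𝒫(u)` if `S_𝒫(u) > −∞`, else `∞`. -/
def Fpf {n : ℕ} (S : NSystem n) (T : ℝ) (u : Euc n → ℝ≥0∞) : EReal :=
  if Spf S u = ⊥ then ⊤ else (Upf S u : EReal) - (T : EReal) * Spf S u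

/-- `u` is the μ-canonical distribution of temperature `T ≥ 0`: for `T > 0` the
minimizer of `F_𝒫(T,·)` on `ℳ^{exp,1}(P)`; for `T = 0` the minimizer of `U_𝒫`
maximizing `S_𝒫` among all minimizers of `U_𝒫`. -/
def IsCanonical {n : ℕ} (S : NSystem n) (T : ℝ) (u : Euc n → ℝ≥0∞) : Prop :=
  u ∈ MExp S 1 ∧
  (0 < T → ∀ u' ∈ MExp S 1, Fpf S T u ≤ Fpf S T u') ∧
  (T = 0 → (∀ u' ∈ MExp S 1, Upf S u ≤ Upf S u') ∧
    ∀ u' ∈ MExp S 1, (∀ u'' ∈ MExp S 1, Upf S u' ≤ Upf S u'') → Spf S u' ≤ Spf S u)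

/-!
Each member of the canonical family minimizes `U - T S` among the members of the family, so the
free energy is an infimum of functions affine in `T`, hence concave, and comparing two temperatures
makes `U` and `S` monotone. Comparison with `u = 1`, whose entropy vanishes, gives
`-T S(u_T) ≤ U(1)` and so `S(u_T) → 0`.

These comparisons take place in `ℝ` because finite boundary energy forces finite entropy: fix a
point `x₀` of the polytope with `u x₀ < ∞` and sweep the polytope by segments from `x₀` to the
boundary. By log-convexity `u` is at most `u(x₀)^(1-t) u(y)^t` along the segment to `y`, and since
`∫₀¹ bᵗ log b dt = b - 1`, the integral of `u log u` along it is linearly bounded in `u(y)`, which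
is integrable over every facet.
-/

section MinimizingFamily

variable {U S : ℝ → ℝ} {s : Set ℝ}

lemma monotoneOn_entropy_of_isMinOn (h : ∀ T ∈ s, IsMinOn (fun T' => U T' - T * S T') s T) :
    MonotoneOn S s := by
  intro T hT T' hT' hTT'
  have h₁ : U T - T * S T ≤ U T' - T * S T' := h T hT hT'
  have h₂ : U T' - T' * S T' ≤ U T - T' * S T := h T' hT' hT
  rcases hTT'.eq_or_lt with rfl | hlt
  · rfl
  · nlinarith

lemma monotoneOn_energy_of_isMinOn (hs : s ⊆ Set.Ici 0)
    (h : ∀ T ∈ s, IsMinOn (fun T' => U T' - T * S T') s T) : MonotoneOn U s := by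
  intro T hT T' hT' hTT'
  have h₁ : U T - T * S T ≤ U T' - T * S T' := h T hT hT'
  have h₂ : T * S T ≤ T * S T' :=
    mul_le_mul_of_nonneg_left (monotoneOn_entropy_of_isMinOn h hT hT' hTT') (hs hT)
  linarith

lemma monotoneOn_freeEnergy_of_isMinOn (hS : ∀ T ∈ s, S T ≤ 0)
    (h : ∀ T ∈ s, IsMinOn (fun T' => U T' - T * S T') s T) :
    MonotoneOn (fun T => U T - T * S T) s := by
  intro T hT T' hT' hTT'
  calc U T - T * S T ≤ U T' - T * S T' := h T hT hT'
    _ ≤ U T' - T' * S T' := sub_le_sub_left (mul_le_mul_of_nonpos_right hTT' (hS T' hT')) _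

-- The free energy is an infimum of functions that are affine in the temperature.
lemma concaveOn_freeEnergy_of_isMinOn (hs : Convex ℝ s)
    (h : ∀ T ∈ s, IsMinOn (fun T' => U T' - T * S T') s T) :
    ConcaveOn ℝ s (fun T => U T - T * S T) := by
  refine ⟨hs, fun T₀ hT₀ T₁ hT₁ a b ha hb hab => ?_⟩
  simp only [smul_eq_mul]
  set T := a * T₀ + b * T₁ with hT
  have hTs : T ∈ s := hs hT₀ hT₁ ha hb hab
  calc a * (U T₀ - T₀ * S T₀) + b * (U T₁ - T₁ * S T₁)
      ≤ a * (U T - T₀ * S T) + b * (U T - T₁ * S T) :=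
        add_le_add (mul_le_mul_of_nonneg_left (h T₀ hT₀ hTs) ha)
          (mul_le_mul_of_nonneg_left (h T₁ hT₁ hTs) hb)
    _ = (a + b) * U T - T * S T := by rw [hT]; ring
    _ = U T - T * S T := by rw [hab, one_mul]

lemma tendsto_entropy_atTop_of_freeEnergy_le {C : ℝ} (hU : ∀ᶠ T in atTop, 0 ≤ U T)
    (hS : ∀ᶠ T in atTop, S T ≤ 0) (h : ∀ᶠ T in atTop, U T - T * S T ≤ C) :
    Tendsto S atTop (𝓝 0) := by
  have hlow : Tendsto (fun T : ℝ => -(C / T)) atTop (𝓝 0) := by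
    simpa using (tendsto_const_nhds.div_atTop tendsto_id : Tendsto (fun T => C / T) atTop _).neg
  refine tendsto_of_tendsto_of_tendsto_of_le_of_le' hlow tendsto_const_nhds ?_ hS
  filter_upwards [hU, h, eventually_gt_atTop 0] with T hUT hT hTpos
  rw [neg_le, le_div_iff₀ hTpos]
  linarith

end MinimizingFamily

section HausdorffMeasure

variable {E F : Type*} [MetricSpace E] [MeasurableSpace E] [BorelSpace E]
  [MetricSpace F] [MeasurableSpace F] [BorelSpace F]

lemma setLIntegral_image_hausdorffMeasure_le {f : E → F} {s : Set E} {K : ℝ≥0} {d : ℝ}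
    (hf : Measurable f) (hK : LipschitzOnWith K f s) (hd : 0 ≤ d) (g : F → ℝ≥0∞) :
    ∫⁻ y in f '' s, g y ∂μH[d] ≤ (K : ℝ≥0∞) ^ d * ∫⁻ x in s, g (f x) ∂μH[d] := by
  have hle : (μH[d] : Measure F).restrict (f '' s) ≤
      ((K : ℝ≥0∞) ^ d) • ((μH[d] : Measure E).restrict s).map f := by
    refine Measure.le_iff.2 fun t ht => ?_
    calc (μH[d] : Measure F).restrict (f '' s) t = μH[d] (f '' (f ⁻¹' t ∩ s)) := by
          rw [Measure.restrict_apply ht, Set.image_preimage_inter]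
      _ ≤ (K : ℝ≥0∞) ^ d * μH[d] (f ⁻¹' t ∩ s) :=
          (hK.mono Set.inter_subset_right).hausdorffMeasure_image_le hd
      _ = _ := by
          rw [Measure.smul_apply, Measure.map_apply hf ht, Measure.restrict_apply (hf ht),
            smul_eq_mul]
  calc ∫⁻ y in f '' s, g y ∂μH[d]
      ≤ ∫⁻ y, g y ∂(((K : ℝ≥0∞) ^ d) • ((μH[d] : Measure E).restrict s).map f) :=
        lintegral_mono' hle le_rfl
    _ = (K : ℝ≥0∞) ^ d * ∫⁻ y, g y ∂((μH[d] : Measure E).restrict s).map f :=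
        lintegral_smul_measure _ _
    _ ≤ (K : ℝ≥0∞) ^ d * ∫⁻ x in s, g (f x) ∂μH[d] := by
        gcongr
        exact lintegral_map_le g f

end HausdorffMeasure

section Charts

variable {E : Type*} [NormedAddCommGroup E] [NormedSpace ℝ E]

lemma isometry_const_add_subtype (V : Submodule ℝ E) (p : E) : Isometry fun v : V => p + v :=
  (IsometryEquiv.addLeft p).isometry.comp isometry_subtype_coe

lemma image_vectorSpan_chart {F : Set E} {p : E} (hp : p ∈ F) :
    (fun v : vectorSpan ℝ F => p + v) '' ((fun v : vectorSpan ℝ F => p + v) ⁻¹' F) = F := by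
  rw [Set.image_preimage_eq_inter_range, Set.inter_eq_left]
  exact fun y hy => ⟨⟨y - p, vsub_mem_vectorSpan ℝ hy hp⟩, add_sub_cancel p y⟩

variable [FiniteDimensional ℝ E] [MeasurableSpace E] [BorelSpace E]

lemma setLIntegral_vectorSpan_chart {F : Set E} {p : E} (hp : p ∈ F) {d : ℝ} (hd : 0 ≤ d)
    (g : E → ℝ≥0∞) :
    ∫⁻ v in (fun v : vectorSpan ℝ F => p + v) ⁻¹' F, g (p + v) ∂μH[d] = ∫⁻ y in F, g y ∂μH[d] := by
  have hφ := isometry_const_add_subtype (vectorSpan ℝ F) p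
  have hemb := hφ.isClosedEmbedding.measurableEmbedding
  conv_rhs => rw [← image_vectorSpan_chart hp]
  rw [← Measure.restrict_restrict_of_subset (Set.image_subset_range _ _),
    ← hφ.map_hausdorffMeasure (Or.inl hd), hemb.restrict_map, hemb.lintegral_map,
    Set.preimage_image_eq _ hφ.injective]

lemma hausdorffMeasure_finrank_vectorSpan_lt_top {F : Set E} (hF : IsCompact F) :
    μH[Module.finrank ℝ (vectorSpan ℝ F)] F < ⊤ := by
  obtain rfl | ⟨p, hp⟩ := F.eq_empty_or_nonempty
  · simp
  have hφ := isometry_const_add_subtype (vectorSpan ℝ F) p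
  have hcpt := hφ.isClosedEmbedding.isCompact_preimage hF
  calc μH[Module.finrank ℝ (vectorSpan ℝ F)] F
      = μH[Module.finrank ℝ (vectorSpan ℝ F)] ((fun v : vectorSpan ℝ F => p + v) ⁻¹' F) := by
        rw [← hφ.hausdorffMeasure_image (Or.inl (Nat.cast_nonneg _)), image_vectorSpan_chart hp]
    _ < ⊤ := hcpt.measure_lt_top

end Charts

section Cones

lemma sSup_mem_frontier_of_isCompact {A : Set ℝ} (hA : IsCompact A) (hne : A.Nonempty) :
    sSup A ∈ frontier A := by
  obtain ⟨hmem, hub⟩ := hA.isGreatest_sSup hne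
  refine ⟨subset_closure hmem, fun hint => ?_⟩
  have hev : ∀ᶠ t in 𝓝[>] sSup A, t ∈ A := nhdsWithin_le_nhds (mem_interior_iff_mem_nhds.1 hint)
  obtain ⟨t, ht, hlt⟩ := (hev.and self_mem_nhdsWithin).exists
  exact (hub ht).not_gt hlt

variable {E : Type*} [NormedAddCommGroup E] [NormedSpace ℝ E]

lemma convexJoin_singleton_eq_image_lineMap (x₀ : E) (F : Set E) :
    convexJoin ℝ {x₀} F = (fun z : E × ℝ => AffineMap.lineMap x₀ z.1 z.2) '' F ×ˢ Set.Icc 0 1 := by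
  ext x
  simp [convexJoin_singleton_left, segment_eq_image_lineMap, and_assoc]

lemma subset_insert_convexJoin_frontier {P : Set E} (hP : IsCompact P) (x₀ : E) :
    P ⊆ insert x₀ (convexJoin ℝ {x₀} (frontier P)) := by
  intro x hx
  refine or_iff_not_imp_left.2 fun hne => ?_
  -- The segment from `x₀` to the last point of `P` on the ray through `x` passes through `x`.
  set A : Set ℝ := AffineMap.lineMap x₀ x ⁻¹' P
  have hemb := (antilipschitzWith_lineMap (𝕜 := ℝ) (Ne.symm hne)).isClosedEmbedding
    (lipschitzWith_lineMap x₀ x).uniformContinuous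
  have hA : IsCompact A := hemb.isCompact_preimage hP
  have h1 : (1 : ℝ) ∈ A := by simpa [A] using hx
  have hle : 1 ≤ sSup A := le_csSup hA.bddAbove h1
  have hy := hemb.continuous.frontier_preimage_subset P (sSup_mem_frontier_of_isCompact hA ⟨1, h1⟩)
  rw [convexJoin_singleton_eq_image_lineMap]
  refine ⟨(AffineMap.lineMap x₀ x (sSup A), (sSup A)⁻¹),
    ⟨hy, by positivity, inv_le_one_of_one_le₀ hle⟩, ?_⟩
  simp only [AffineMap.lineMap_lineMap_right]
  rw [inv_mul_cancel₀ (by positivity), AffineMap.lineMap_apply_one]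

variable [FiniteDimensional ℝ E] [MeasurableSpace E] [BorelSpace E]

lemma exists_setLIntegral_image_le_of_locallyLipschitz {M : Type*} [NormedAddCommGroup M]
    [NormedSpace ℝ M] [FiniteDimensional ℝ M] [MeasurableSpace M] [BorelSpace M]
    (ν : Measure M) [ν.IsAddHaarMeasure] (μ : Measure E) [μ.IsAddHaarMeasure]
    (hdim : Module.finrank ℝ M = Module.finrank ℝ E)
    {f : M → E} (hf : LocallyLipschitz f) {s : Set M} (hs : IsCompact s) :
    ∃ C : ℝ≥0, ∀ g : E → ℝ≥0∞, ∫⁻ x in f '' s, g x ∂μ ≤ C * ∫⁻ z in s, g (f z) ∂ν := by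
  obtain ⟨K, hK⟩ := hf.locallyLipschitzOn.exists_lipschitzOnWith_of_compact hs
  set d : ℝ := (Module.finrank ℝ M : ℝ) with hd
  have hd0 : 0 ≤ d := Nat.cast_nonneg _
  obtain ⟨a, ha⟩ : ∃ a : ℝ≥0, μ = a • (μH[d] : Measure E) :=
    ⟨_, by rw [hd, hdim]; exact Measure.isAddLeftInvariant_eq_smul μ _⟩
  obtain ⟨b, hb⟩ : ∃ b : ℝ≥0, (μH[d] : Measure M) = b • ν :=
    ⟨_, Measure.isAddLeftInvariant_eq_smul _ ν⟩
  refine ⟨a * (K ^ d * b), fun g => ?_⟩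
  calc ∫⁻ x in f '' s, g x ∂μ = a * ∫⁻ x in f '' s, g x ∂μH[d] := by
        rw [ha, Measure.restrict_smul, lintegral_smul_measure, ENNReal.smul_def, smul_eq_mul]
    _ ≤ a * ((K : ℝ≥0∞) ^ d * ∫⁻ z in s, g (f z) ∂μH[d]) := by
        gcongr
        exact setLIntegral_image_hausdorffMeasure_le hf.continuous.measurable hK hd0 g
    _ = (a * (K ^ d * b) : ℝ≥0) * ∫⁻ z in s, g (f z) ∂ν := by
        rw [hb, Measure.restrict_smul, lintegral_smul_measure, ENNReal.smul_def, smul_eq_mul]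
        push_cast [ENNReal.coe_rpow_of_nonneg _ hd0]
        ring

lemma exists_setLIntegral_convexJoin_le (μ : Measure E) [μ.IsAddHaarMeasure] {F : Set E}
    (hF : IsCompact F) (hdim : Module.finrank ℝ (vectorSpan ℝ F) + 1 = Module.finrank ℝ E)
    (x₀ : E) : ∃ C : ℝ≥0, ∀ g : E → ℝ≥0∞, ∫⁻ x in convexJoin ℝ {x₀} F, g x ∂μ ≤
      C * ∫⁻ y in F, (∫⁻ t in Set.Icc (0 : ℝ) 1, g (AffineMap.lineMap x₀ y t))
        ∂μH[Module.finrank ℝ (vectorSpan ℝ F)] := by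
  obtain rfl | ⟨p, hp⟩ := F.eq_empty_or_nonempty
  · exact ⟨0, by simp⟩
  set V := vectorSpan ℝ F
  set B : Set V := (fun v : V => p + v) ⁻¹' F
  set d : ℝ := (Module.finrank ℝ V : ℝ)
  let f : V × ℝ → E := fun z => AffineMap.lineMap x₀ (p + z.1 : E) z.2
  have hf : LocallyLipschitz f :=
    ContDiff.locallyLipschitz (𝕂 := ℝ) (by
      have hval : ContDiff ℝ 1 fun z : V × ℝ => (z.1 : E) := V.subtypeL.contDiff.comp contDiff_fst
      simp only [f, AffineMap.lineMap_apply_module]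
      fun_prop)
  have hB : IsCompact B :=
    (isometry_const_add_subtype V p).isClosedEmbedding.isCompact_preimage hF
  have himage : f '' B ×ˢ Set.Icc 0 1 = convexJoin ℝ {x₀} F := by
    rw [convexJoin_singleton_eq_image_lineMap]
    conv_rhs => rw [← image_vectorSpan_chart hp, ← Set.image_id (Set.Icc (0 : ℝ) 1),
      ← Set.prodMap_image_prod, Set.image_image]
    rfl
  obtain ⟨C, hC⟩ := exists_setLIntegral_image_le_of_locallyLipschitz
    ((μH[d] : Measure V).prod (volume : Measure ℝ)) μ (by simpa using hdim) hf
    (hB.prod isCompact_Icc)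
  refine ⟨C, fun g => ?_⟩
  calc ∫⁻ x in convexJoin ℝ {x₀} F, g x ∂μ
      ≤ C * ∫⁻ z in B ×ˢ Set.Icc 0 1, g (f z) ∂(μH[d] : Measure V).prod volume := himage ▸ hC g
    _ ≤ C * ∫⁻ v in B, (∫⁻ t in Set.Icc (0 : ℝ) 1, g (f (v, t))) ∂μH[d] := by
        rw [← Measure.prod_restrict]
        gcongr
        exact lintegral_prod_le _
    _ = C * ∫⁻ y in F, (∫⁻ t in Set.Icc (0 : ℝ) 1, g (AffineMap.lineMap x₀ y t)) ∂μH[d] := by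
        rw [← setLIntegral_vectorSpan_chart hp (Nat.cast_nonneg _)]

end Cones

section Polytopes

variable {E : Type*} [NormedAddCommGroup E] [NormedSpace ℝ E]

/-- The finite family `K` of affine functions presents `P` as an intersection of closed half-spaces
`{0 ≤ l}` none of which can be dropped: for each `l ∈ K` the point `z` violates the constraint `l`
only. -/
structure IsIrredundantPresentation (K : Finset (E →ᵃ[ℝ] ℝ)) (P : Set E) : Prop where
  mem_iff : ∀ x, x ∈ P ↔ ∀ l ∈ K, 0 ≤ l x
  exists_neg : ∀ l ∈ K, ∃ z, l z < 0 ∧ ∀ j ∈ K, j ≠ l → 0 ≤ j z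

lemma exists_isIrredundantPresentation (K : Finset (E →ᵃ[ℝ] ℝ)) :
    ∃ K', IsIrredundantPresentation K' {x | ∀ l ∈ K, 0 ≤ l x} := by
  classical
  induction K using Finset.strongInduction with
  | H K ih =>
    by_cases hK : ∀ l ∈ K, ∃ z, l z < 0 ∧ ∀ j ∈ K, j ≠ l → 0 ≤ j z
    · exact ⟨K, fun x => Iff.rfl, hK⟩
    · push Not at hK
      obtain ⟨l, hl, hredundant⟩ := hK
      obtain ⟨K', hK'⟩ := ih (K.erase l) (Finset.erase_ssubset hl)
      have hset : {x | ∀ j ∈ K.erase l, 0 ≤ j x} = {x | ∀ j ∈ K, 0 ≤ j x} := by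
        ext x
        refine ⟨fun hx j hj => ?_, fun hx j hj => hx j (Finset.mem_of_mem_erase hj)⟩
        by_cases hjl : j = l
        · by_contra! hneg
          obtain ⟨i, hi, hil, hix⟩ := hredundant x (hjl ▸ hneg)
          exact (hx i (Finset.mem_erase.2 ⟨hil, hi⟩)).not_gt hix
        · exact hx j (Finset.mem_erase.2 ⟨hjl, hj⟩)
      exact ⟨K', hset ▸ hK'⟩

lemma vectorSpan_le_ker_linear {F : Set E} {l : E →ᵃ[ℝ] ℝ} (hF : ∀ y ∈ F, l y = 0) :
    vectorSpan ℝ F ≤ LinearMap.ker l.linear := by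
  rw [vectorSpan_def, Submodule.span_le]
  rintro _ ⟨a, ha, b, hb, rfl⟩
  rw [SetLike.mem_coe, LinearMap.mem_ker, AffineMap.linearMap_vsub, hF a ha, hF b hb, vsub_self]

namespace IsIrredundantPresentation

variable {K : Finset (E →ᵃ[ℝ] ℝ)} {P : Set E}

lemma linear_ne_zero (h : IsIrredundantPresentation K P) (hP : P.Nonempty) {l : E →ᵃ[ℝ] ℝ}
    (hl : l ∈ K) : l.linear ≠ 0 := by
  intro hzero
  obtain ⟨x, hx⟩ := hP
  obtain ⟨z, hz, -⟩ := h.exists_neg l hl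
  have hconst : l x = l z := by
    rw [← sub_eq_zero, ← vsub_eq_sub, ← AffineMap.linearMap_vsub, hzero, LinearMap.zero_apply]
  exact ((h.mem_iff x).1 hx l hl).not_gt (hconst ▸ hz)

variable [FiniteDimensional ℝ E]

lemma pos_of_mem_interior (h : IsIrredundantPresentation K P) {x : E} (hx : x ∈ interior P)
    {l : E →ᵃ[ℝ] ℝ} (hl : l ∈ K) : 0 < l x := by
  have hopen : IsOpenMap l := AffineMap.isOpenMap_linear_iff.1 <|
    l.linear.isOpenMap_of_finiteDimensional <|
      LinearMap.surjective (h.linear_ne_zero ⟨x, interior_subset hx⟩ hl)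
  have hsub : P ⊆ l ⁻¹' Set.Ici 0 := fun y hy => (h.mem_iff y).1 hy l hl
  have hmem := interior_mono hsub hx
  rwa [← hopen.preimage_interior_eq_interior_preimage l.continuous_of_finiteDimensional,
    interior_Ici] at hmem

lemma exists_eq_zero_forall_ne_pos (h : IsIrredundantPresentation K P)
    (hP : (interior P).Nonempty) {l : E →ᵃ[ℝ] ℝ} (hl : l ∈ K) :
    ∃ w, l w = 0 ∧ ∀ j ∈ K, j ≠ l → 0 < j w := by
  obtain ⟨x, hx⟩ := hP
  obtain ⟨z, hz, hz'⟩ := h.exists_neg l hl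
  have hlx := h.pos_of_mem_interior hx hl
  have hd : 0 < l x - l z := by linarith
  refine ⟨AffineMap.lineMap x z (l x / (l x - l z)), ?_, fun j hj hjl => ?_⟩
  · rw [AffineMap.apply_lineMap, AffineMap.lineMap_apply_ring']
    field_simp
    ring
  · have ht : l x / (l x - l z) < 1 := by rw [div_lt_one hd]; linarith
    have hjx := h.pos_of_mem_interior hx hj
    rw [AffineMap.apply_lineMap, AffineMap.lineMap_apply_ring]
    exact add_pos_of_pos_of_nonneg (mul_pos (sub_pos.2 ht) hjx)
      (mul_nonneg (by positivity) (hz' j hj hjl))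

lemma vectorSpan_eq_ker_linear (h : IsIrredundantPresentation K P) (hP : (interior P).Nonempty)
    {l : E →ᵃ[ℝ] ℝ} (hl : l ∈ K) :
    vectorSpan ℝ {y ∈ P | l y = 0} = LinearMap.ker l.linear := by
  refine le_antisymm (vectorSpan_le_ker_linear fun y hy => hy.2) fun v hv => ?_
  obtain ⟨w, hlw, hw⟩ := h.exists_eq_zero_forall_ne_pos hP hl
  have hline (e : ℝ) : l (w + e • v) = 0 := by
    rw [add_comm, ← vadd_eq_add, AffineMap.map_vadd, map_smul, LinearMap.mem_ker.1 hv, hlw]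
    simp
  have hmem {e : ℝ} (he : ∀ j ∈ K, j ≠ l → 0 < j (w + e • v)) :
      w + e • v ∈ {y ∈ P | l y = 0} := by
    refine ⟨(h.mem_iff _).2 fun j hj => ?_, hline e⟩
    by_cases hjl : j = l
    · rw [hjl, hline]
    · exact (he j hj hjl).le
  have hev : ∀ᶠ e : ℝ in 𝓝 0, ∀ j ∈ K, j ≠ l → 0 < j (w + e • v) := by
    simp only [Filter.eventually_all_finset, Filter.eventually_imp_distrib_left]
    intro j hj hjl
    have hcont : Continuous fun e : ℝ => j (w + e • v) :=
      j.continuous_of_finiteDimensional.comp (by fun_prop)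
    exact (hcont.tendsto' 0 (j w) (by simp)).eventually (lt_mem_nhds (hw j hj hjl))
  obtain ⟨e, he, he0⟩ := ((hev.filter_mono nhdsWithin_le_nhds).and
    (self_mem_nhdsWithin (s := {0}ᶜ))).exists
  have hspan := vsub_mem_vectorSpan ℝ (hmem he) (hmem hev.self_of_nhds)
  rw [zero_smul, add_zero, vsub_eq_sub, add_sub_cancel_left] at hspan
  exact (Submodule.smul_mem_iff _ he0).1 hspan

lemma frontier_eq (h : IsIrredundantPresentation K P) (hP : IsClosed P) :
    frontier P = ⋃ l ∈ K, {y ∈ P | l y = 0} := by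
  ext y
  simp only [Set.mem_iUnion, Set.mem_ofPred_eq, exists_prop]
  constructor
  · intro hy
    have hyP := hP.frontier_subset hy
    by_contra! hne
    have hev : ∀ᶠ x in 𝓝 y, ∀ l ∈ K, 0 < l x := (Filter.eventually_all_finset K).2 fun l hl =>
      l.continuous_of_finiteDimensional.continuousAt.eventually
        (lt_mem_nhds (((h.mem_iff y).1 hyP l hl).lt_of_ne' (hne l hl hyP)))
    refine hy.2 (mem_interior_iff_mem_nhds.2 (hev.mono fun x hx => ?_))
    exact (h.mem_iff x).2 fun l hl => (hx l hl).le
  · rintro ⟨l, hl, hyP, hly⟩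
    exact ⟨subset_closure hyP, fun hy => (h.pos_of_mem_interior hy hl).ne' hly⟩

end IsIrredundantPresentation

lemma IsFaceOf.subset {n : ℕ} {P F : Set (Euc n)} (hF : IsFaceOf P F) : F ⊆ P := by
  obtain ⟨l, -, -, rfl⟩ := hF
  exact Set.sep_subset _ _

lemma IsFaceOf.isCompact {n : ℕ} {P F : Set (Euc n)} (hF : IsFaceOf P F) (hP : IsCompact P) :
    IsCompact F := by
  obtain ⟨l, -, -, rfl⟩ := hF
  exact hP.inter_right (isClosed_singleton.preimage l.continuous_of_finiteDimensional)

lemma IsFacetOf.cast_finrank_vectorSpan {n : ℕ} {P F : Set (Euc n)} (hF : IsFacetOf P F) :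
    (Module.finrank ℝ (vectorSpan ℝ F) : ℝ) = n - 1 :=
  eq_sub_of_add_eq (mod_cast hF.2)

lemma IsFacetOf.hausdorffMeasure_ne_top {n : ℕ} {P F : Set (Euc n)} (hF : IsFacetOf P F)
    (hP : IsCompact P) : μH[(n : ℝ) - 1] F ≠ ⊤ := by
  rw [← hF.cast_finrank_vectorSpan]
  exact (hausdorffMeasure_finrank_vectorSpan_lt_top (hF.1.isCompact hP)).ne

lemma IsIrredundantPresentation.isFacetOf {n : ℕ} {P : Set (Euc n)}
    {K : Finset (Euc n →ᵃ[ℝ] ℝ)} (h : IsIrredundantPresentation K P) (hP : (interior P).Nonempty)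
    {l : Euc n →ᵃ[ℝ] ℝ} (hl : l ∈ K) : IsFacetOf P {y ∈ P | l y = 0} := by
  have hlin := h.linear_ne_zero (hP.mono interior_subset) hl
  refine ⟨⟨l, fun h0 => hlin (by rw [h0, AffineMap.zero_linear]),
    fun y hy => (h.mem_iff y).1 hy l hl, rfl⟩, ?_⟩
  rw [h.vectorSpan_eq_ker_linear hP hl, Module.Dual.finrank_ker_add_one_of_ne_zero hlin,
    finrank_euclideanSpace_fin]

lemma IsPolytope.exists_finite_isFacetOf_sUnion_eq_frontier {n : ℕ} {P : Set (Euc n)}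
    (hP : IsPolytope P) :
    ∃ 𝓕 : Set (Set (Euc n)), 𝓕.Finite ∧ (∀ F ∈ 𝓕, IsFacetOf P F) ∧ ⋃₀ 𝓕 = frontier P := by
  classical
  obtain ⟨hcompact, hint, m, L, -, hPL⟩ := hP
  obtain ⟨K, hK⟩ := exists_isIrredundantPresentation (Finset.univ.image L)
  have hset : {x | ∀ l ∈ Finset.univ.image L, 0 ≤ l x} = P := by
    ext x
    simp [hPL]
  rw [hset] at hK
  refine ⟨(fun l : Euc n →ᵃ[ℝ] ℝ => {y ∈ P | l y = 0}) '' K, K.finite_toSet.image _, ?_, ?_⟩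
  · rintro _ ⟨l, hl, rfl⟩
    exact hK.isFacetOf hint hl
  · rw [Set.sUnion_image, hK.frontier_eq hcompact.isClosed]
    rfl

end Polytopes

section LogConvexity

lemma xlogx_le {y : ℝ≥0∞} {r : ℝ} (hr : 1 ≤ r) (hy : y ≤ ENNReal.ofReal r) :
    xlogx y ≤ r * Real.log r := by
  have hyr : y.toReal ≤ r := ENNReal.toReal_le_of_le_ofReal (by positivity) hy
  have hexp : Real.exp (-1) ≤ 1 := Real.exp_le_one_iff.2 (by norm_num)
  obtain h1 | h1 := le_total 1 y.toReal
  · exact Real.mul_log_strictMonoOn.monotoneOn (hexp.trans h1) (hexp.trans hr) hyr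
  · calc xlogx y ≤ 0 := mul_nonpos_of_nonneg_of_nonpos ENNReal.toReal_nonneg
          (Real.log_nonpos ENNReal.toReal_nonneg h1)
      _ ≤ r * Real.log r := mul_nonneg (by positivity) (Real.log_nonneg hr)

lemma integral_rpow_mul_log {B : ℝ} (hB : 0 < B) :
    ∫ t in (0 : ℝ)..1, B ^ t * Real.log B = B - 1 := by
  rw [intervalIntegral.integral_eq_sub_of_hasDerivAt
    (fun t _ => (Real.hasStrictDerivAt_const_rpow hB t).hasDerivAt)
    (((Real.continuous_const_rpow hB.ne').mul continuous_const).intervalIntegrable 0 1),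
    Real.rpow_one, Real.rpow_zero]

lemma xlogx_le_of_le_rpow_mul_rpow {M B t : ℝ} {y : ℝ≥0∞} (hM : 1 ≤ M) (hB : 1 ≤ B)
    (ht : t ∈ Set.Icc (0 : ℝ) 1) (hy : y ≤ ENNReal.ofReal (M ^ (1 - t) * B ^ t)) :
    xlogx y ≤ M * Real.log M * B + M * (B ^ t * Real.log B) := by
  have hBt : 1 ≤ B ^ t := Real.one_le_rpow hB ht.1
  have hMt : M ^ (1 - t) ≤ M := by
    simpa using Real.rpow_le_rpow_of_exponent_le hM (sub_le_self 1 ht.1)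
  have hBtB : B ^ t ≤ B := by simpa using Real.rpow_le_rpow_of_exponent_le hB ht.2
  have hlogM := Real.log_nonneg hM
  have hlogB := Real.log_nonneg hB
  calc xlogx y ≤ M * B ^ t * Real.log (M * B ^ t) :=
        xlogx_le (one_le_mul_of_one_le_of_one_le hM hBt)
          (hy.trans (ENNReal.ofReal_le_ofReal (by gcongr)))
    _ = M * Real.log M * B ^ t + M * (B ^ t * (t * Real.log B)) := by
        rw [Real.log_mul (by positivity) (by positivity), Real.log_rpow (by positivity)]
        ring
    _ ≤ M * Real.log M * B + M * (B ^ t * Real.log B) := by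
        gcongr
        exact mul_le_of_le_one_left hlogB ht.2

-- `∫₀¹ Bᵗ log B dt = B - 1` grows only linearly in `B`, although `B log B` does not.
lemma setLIntegral_xlogx_le_of_le_rpow_mul_rpow {M B : ℝ} (hM : 1 ≤ M) (hB : 1 ≤ B)
    {v : ℝ → ℝ≥0∞}
    (hv : ∀ t ∈ Set.Icc (0 : ℝ) 1, v t ≤ ENNReal.ofReal (M ^ (1 - t) * B ^ t)) :
    ∫⁻ t in Set.Icc (0 : ℝ) 1, ENNReal.ofReal (xlogx (v t)) ≤
      ENNReal.ofReal (M * (1 + Real.log M) * B) := by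
  have hlogM := Real.log_nonneg hM
  have hlogB := Real.log_nonneg hB
  have hcont : Continuous fun t : ℝ => B ^ t * Real.log B :=
    (Real.continuous_const_rpow (by positivity)).mul continuous_const
  calc ∫⁻ t in Set.Icc (0 : ℝ) 1, ENNReal.ofReal (xlogx (v t))
      ≤ ∫⁻ t in Set.Icc (0 : ℝ) 1,
          ENNReal.ofReal (M * Real.log M * B + M * (B ^ t * Real.log B)) :=
        setLIntegral_mono' measurableSet_Icc fun t ht =>
          ENNReal.ofReal_le_ofReal (xlogx_le_of_le_rpow_mul_rpow hM hB ht (hv t ht))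
    _ = ENNReal.ofReal (∫ t in (0 : ℝ)..1, (M * Real.log M * B + M * (B ^ t * Real.log B))) := by
        rw [intervalIntegral.integral_of_le zero_le_one, ← integral_Icc_eq_integral_Ioc,
          ofReal_integral_eq_lintegral_ofReal]
        · exact (by fun_prop : Continuous _).integrableOn_Icc
        · filter_upwards with t
          positivity
    _ = ENNReal.ofReal (M * Real.log M * B + M * (B - 1)) := by
        rw [intervalIntegral.integral_add intervalIntegrable_const
          ((hcont.const_mul M).intervalIntegrable 0 1), intervalIntegral.integral_const,
          intervalIntegral.integral_const_mul, integral_rpow_mul_log (by positivity),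
          sub_zero, one_smul]
    _ ≤ ENNReal.ofReal (M * (1 + Real.log M) * B) := ENNReal.ofReal_le_ofReal (by linarith)

lemma le_ofReal_max_toReal_one {a : ℝ≥0∞} (ha : a ≠ ⊤) : a ≤ ENNReal.ofReal (max a.toReal 1) :=
  (ENNReal.le_ofReal_iff_toReal_le ha (by positivity)).2 (le_max_left _ _)

lemma exists_setLIntegral_xlogx_le {a : ℝ≥0∞} (ha : a ≠ ⊤) :
    ∃ C : ℝ≥0, ∀ (b : ℝ≥0∞) (v : ℝ → ℝ≥0∞),
      (∀ t ∈ Set.Icc (0 : ℝ) 1, v t ≤ a ^ (1 - t) * b ^ t) →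
      ∫⁻ t in Set.Icc (0 : ℝ) 1, ENNReal.ofReal (xlogx (v t)) ≤ C * (1 + b) := by
  set M : ℝ := max a.toReal 1
  have hM : 1 ≤ M := le_max_right _ _
  have hlogM := Real.log_nonneg hM
  refine ⟨(M * (1 + Real.log M)).toNNReal, fun b v hv => ?_⟩
  obtain rfl | hb := eq_or_ne b ⊤
  · rw [add_top, ENNReal.mul_top (ENNReal.coe_ne_zero.2 (Real.toNNReal_pos.2 (by positivity)).ne')]
    exact le_top
  set B : ℝ := max b.toReal 1
  have hB : 1 ≤ B := le_max_right _ _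
  have hv' (t : ℝ) (ht : t ∈ Set.Icc (0 : ℝ) 1) : v t ≤ ENNReal.ofReal (M ^ (1 - t) * B ^ t) := by
    rw [ENNReal.ofReal_mul (by positivity), ← ENNReal.ofReal_rpow_of_pos (by positivity),
      ← ENNReal.ofReal_rpow_of_pos (by positivity)]
    exact (hv t ht).trans <| mul_le_mul'
      (ENNReal.rpow_le_rpow (le_ofReal_max_toReal_one ha) (sub_nonneg.2 ht.2))
      (ENNReal.rpow_le_rpow (le_ofReal_max_toReal_one hb) ht.1)
  have hB1b : ENNReal.ofReal B ≤ 1 + b := by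
    refine ENNReal.ofReal_le_of_le_toReal ?_
    rw [ENNReal.toReal_add ENNReal.one_ne_top hb, ENNReal.toReal_one]
    exact max_le (le_add_of_nonneg_left zero_le_one) (le_add_of_nonneg_right ENNReal.toReal_nonneg)
  calc ∫⁻ t in Set.Icc (0 : ℝ) 1, ENNReal.ofReal (xlogx (v t))
      ≤ ENNReal.ofReal (M * (1 + Real.log M) * B) :=
        setLIntegral_xlogx_le_of_le_rpow_mul_rpow hM hB hv'
    _ ≤ (M * (1 + Real.log M)).toNNReal * (1 + b) := by
        rw [ENNReal.ofReal_mul (by positivity)]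
        exact mul_le_mul' le_rfl hB1b

end LogConvexity

section EntropySign

variable {α : Type*} [MeasurableSpace α] {ν : Measure α}

lemma lintegral_ofReal_neg_xlogx_ne_top [IsFiniteMeasure ν] (u : α → ℝ≥0∞) :
    ∫⁻ x, ENNReal.ofReal (-xlogx (u x)) ∂ν ≠ ⊤ := by
  have hle (x : α) : ENNReal.ofReal (-xlogx (u x)) ≤ 1 := by
    have hy : 0 ≤ (u x).toReal := ENNReal.toReal_nonneg
    have hsub : (u x).toReal - 1 ≤ xlogx (u x) := Real.self_sub_one_le_mul_log hy
    exact ENNReal.ofReal_le_one.2 (by linarith)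
  exact ((lintegral_mono hle).trans_lt (by simp)).ne

lemma ofReal_neg_xlogx_add_le {y : ℝ≥0∞} (hy : y ≠ ⊤) :
    ENNReal.ofReal (-xlogx y) + y ≤ ENNReal.ofReal (xlogx y) + 1 := by
  have hy0 : 0 ≤ y.toReal := ENNReal.toReal_nonneg
  have hsub : y.toReal - 1 ≤ xlogx y := Real.self_sub_one_le_mul_log hy0
  obtain h | h := le_total 0 (xlogx y)
  · rw [ENNReal.ofReal_of_nonpos (neg_nonpos.2 h), zero_add, ← ENNReal.ofReal_one,
      ← ENNReal.ofReal_add h zero_le_one]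
    exact (ENNReal.le_ofReal_iff_toReal_le hy (by positivity)).2 (by linarith)
  · rw [ENNReal.ofReal_of_nonpos h, zero_add]
    calc ENNReal.ofReal (-xlogx y) + y = ENNReal.ofReal (-xlogx y + y.toReal) := by
          rw [ENNReal.ofReal_add (neg_nonneg.2 h) hy0, ENNReal.ofReal_toReal hy]
      _ ≤ 1 := ENNReal.ofReal_le_one.2 (by linarith)

-- Jensen's inequality, by integrating `y - 1 ≤ y log y`.
lemma lintegral_ofReal_neg_xlogx_le [IsFiniteMeasure ν] {u : α → ℝ≥0∞} (hu : AEMeasurable u ν)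
    (hmean : ∫⁻ x, u x ∂ν = ν Set.univ) :
    ∫⁻ x, ENNReal.ofReal (-xlogx (u x)) ∂ν ≤ ∫⁻ x, ENNReal.ofReal (xlogx (u x)) ∂ν := by
  have hfin : ∀ᵐ x ∂ν, u x < ⊤ := ae_lt_top' hu (hmean ▸ measure_ne_top ν _)
  refine (ENNReal.add_le_add_iff_right (measure_ne_top ν Set.univ)).1 ?_
  calc ∫⁻ x, ENNReal.ofReal (-xlogx (u x)) ∂ν + ν Set.univ
      ≤ ∫⁻ x, (ENNReal.ofReal (-xlogx (u x)) + u x) ∂ν := by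
        rw [← hmean]
        exact le_lintegral_add _ _
    _ ≤ ∫⁻ x, (ENNReal.ofReal (xlogx (u x)) + 1) ∂ν :=
        lintegral_mono_ae (hfin.mono fun x hx => ofReal_neg_xlogx_add_le hx.ne)
    _ = ∫⁻ x, ENNReal.ofReal (xlogx (u x)) ∂ν + ν Set.univ := by
        rw [lintegral_add_right _ measurable_const, lintegral_one]

lemma aemeasurable_restrict_of_lowerSemicontinuousOn [TopologicalSpace α] [OpensMeasurableSpace α]
    {u : α → ℝ≥0∞} {P : Set α} (hu : LowerSemicontinuousOn u P) (hP : MeasurableSet P) :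
    AEMeasurable u (ν.restrict P) :=
  aemeasurable_restrict_of_measurable_subtype hP
    (lowerSemicontinuous_restrict_iff.2 hu).measurable

end EntropySign

section LogConvexEntropy

variable {n : ℕ} {P F : Set (Euc n)} {u : Euc n → ℝ≥0∞} {x₀ : Euc n}

lemma LogConvexOn.setLIntegral_convexJoin_xlogx_ne_top (hu : LogConvexOn P u) (hP : IsCompact P)
    (hx₀ : x₀ ∈ P) (hux₀ : u x₀ ≠ ⊤) (hF : IsFacetOf P F)
    (huF : ∫⁻ y in F, u y ∂μH[(n : ℝ) - 1] ≠ ⊤) :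
    ∫⁻ x in convexJoin ℝ {x₀} F, ENNReal.ofReal (xlogx (u x)) ≠ ⊤ := by
  have hFcompact : IsCompact F := hF.1.isCompact hP
  obtain ⟨A, hA⟩ := exists_setLIntegral_convexJoin_le volume hFcompact (by simpa using hF.2) x₀
  obtain ⟨C, hC⟩ := exists_setLIntegral_xlogx_le hux₀
  rw [hF.cast_finrank_vectorSpan] at hA
  have hray (y : Euc n) (hy : y ∈ F) :
      ∫⁻ t in Set.Icc (0 : ℝ) 1, ENNReal.ofReal (xlogx (u (AffineMap.lineMap x₀ y t))) ≤
        C * (1 + u y) :=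
    hC _ _ fun t ht => by
      rw [AffineMap.lineMap_apply_module]
      exact hu hx₀ (hF.1.subset hy) ht.1 ht.2
  refine ne_top_of_le_ne_top (ENNReal.mul_ne_top ENNReal.coe_ne_top ?_) (hA _)
  refine ne_top_of_le_ne_top ?_ (setLIntegral_mono' hFcompact.measurableSet hray)
  rw [lintegral_const_mul' _ _ ENNReal.coe_ne_top, lintegral_add_left measurable_const,
    setLIntegral_one]
  exact ENNReal.mul_ne_top ENNReal.coe_ne_top
    (ENNReal.add_ne_top.2 ⟨hF.hausdorffMeasure_ne_top hP, huF⟩)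

lemma LogConvexOn.setLIntegral_xlogx_ne_top (hu : LogConvexOn P u) (hP : IsPolytope P)
    (hx₀ : x₀ ∈ P) (hux₀ : u x₀ ≠ ⊤)
    (huF : ∀ F, IsFacetOf P F → F ⊆ frontier P → ∫⁻ y in F, u y ∂μH[(n : ℝ) - 1] ≠ ⊤) :
    ∫⁻ x in P, ENNReal.ofReal (xlogx (u x)) ≠ ⊤ := by
  obtain ⟨𝓕, hfin, hfacet, hcover⟩ := hP.exists_finite_isFacetOf_sUnion_eq_frontier
  set ν : Measure (Euc n) := volume.withDensity fun x => ENNReal.ofReal (xlogx (u x))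
  have hpoint : ν {x₀} < ⊤ := by
    rw [withDensity_apply', lintegral_singleton]
    exact ENNReal.mul_lt_top ENNReal.ofReal_lt_top isCompact_singleton.measure_lt_top
  have hcone (F) (hF : F ∈ 𝓕) : ν (convexJoin ℝ {x₀} F) < ⊤ := by
    rw [withDensity_apply', lt_top_iff_ne_top]
    exact hu.setLIntegral_convexJoin_xlogx_ne_top hP.1 hx₀ hux₀ (hfacet F hF)
      (huF F (hfacet F hF) (hcover ▸ Set.subset_sUnion_of_mem hF))
  have hsub : P ⊆ {x₀} ∪ ⋃ F ∈ 𝓕, convexJoin ℝ {x₀} F := by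
    simpa only [← hcover, Set.sUnion_eq_biUnion, convexJoin_iUnion_right, Set.insert_eq] using
      subset_insert_convexJoin_frontier hP.1 x₀
  rw [← withDensity_apply', ← lt_top_iff_ne_top]
  exact (measure_mono hsub).trans_lt
    (measure_union_lt_top hpoint (measure_biUnion_lt_top hfin hcone))

end LogConvexEntropy

section Systems

namespace NSystem

variable {n : ℕ} (S : NSystem n) {u : Euc n → ℝ≥0∞}

lemma measure_ne_top : S.μ S.P ≠ ⊤ := by
  obtain ⟨c, -, hμ⟩ := S.flat
  rw [hμ, Measure.smul_apply, Measure.restrict_apply_self, smul_eq_mul]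
  exact ENNReal.mul_ne_top ENNReal.ofReal_ne_top S.simple.1.1.measure_ne_top

lemma measure_pos : 0 < S.μ S.P := by
  obtain ⟨c, hc, hμ⟩ := S.flat
  rw [hμ, Measure.smul_apply, Measure.restrict_apply_self, smul_eq_mul]
  exact ENNReal.mul_pos (by simpa using hc)
    (Measure.measure_pos_of_nonempty_interior volume S.simple.1.2.1).ne'

instance : IsFiniteMeasure (S.μ.restrict S.P) :=
  isFiniteMeasure_restrict.2 S.measure_ne_top

lemma boundaryMeasure_ne_top : S.σ (frontier S.P) ≠ ⊤ := by
  obtain ⟨𝓕, hfin, hfacet, hcover⟩ := S.simple.1.exists_finite_isFacetOf_sUnion_eq_frontier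
  rw [← hcover, Set.sUnion_eq_biUnion]
  refine (measure_biUnion_lt_top hfin fun F hF => ?_).ne
  obtain ⟨c, -, hσ⟩ := S.flat_bdry F (hfacet F hF)
  rw [← Measure.restrict_apply_self, hσ, Measure.smul_apply, Measure.restrict_apply_self,
    smul_eq_mul]
  exact ENNReal.mul_lt_top ENNReal.ofReal_lt_top
    ((hfacet F hF).hausdorffMeasure_ne_top S.simple.1.1).lt_top

variable {S}

lemma setLIntegral_facet_ne_top (hU : Upf S u ≠ ⊤) {F : Set (Euc n)} (hF : IsFacetOf S.P F)
    (hFP : F ⊆ frontier S.P) : ∫⁻ y in F, u y ∂μH[(n : ℝ) - 1] ≠ ⊤ := by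
  obtain ⟨c, hc, hσ⟩ := S.flat_bdry F hF
  have hfrontier : ∫⁻ x in frontier S.P, u x ∂S.σ ≠ ⊤ := fun h =>
    hU (by rw [Upf, h, ENNReal.mul_top (ENNReal.inv_ne_zero.2 S.measure_ne_top)])
  have hle : ENNReal.ofReal c * ∫⁻ y in F, u y ∂μH[(n : ℝ) - 1] ≤
      ∫⁻ x in frontier S.P, u x ∂S.σ := by
    rw [← smul_eq_mul, ← lintegral_smul_measure, ← hσ]
    exact lintegral_mono_set hFP
  intro h
  rw [h, ENNReal.mul_top (by simpa using hc)] at hle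
  exact hfrontier (top_le_iff.1 hle)

lemma exists_ne_top_of_mem_mExp (hu : u ∈ MExp S 1) : ∃ x ∈ S.P, u x ≠ ⊤ := by
  obtain ⟨-, -, -, hmean, -⟩ := hu
  by_contra! htop
  have hint : ∫⁻ x in S.P, u x ∂S.μ = ⊤ := by
    rw [setLIntegral_congr_fun S.simple.1.1.measurableSet htop, setLIntegral_const,
      ENNReal.top_mul S.measure_pos.ne']
  exact S.measure_ne_top (hmean ▸ hint)

lemma setLIntegral_xlogx_ne_top (hu : u ∈ MExp S 1) (hU : Upf S u ≠ ⊤) :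
    ∫⁻ x in S.P, ENNReal.ofReal (xlogx (u x)) ∂S.μ ≠ ⊤ := by
  obtain ⟨x₀, hx₀, hux₀⟩ := exists_ne_top_of_mem_mExp hu
  obtain ⟨c, -, hμ⟩ := S.flat
  rw [hμ, Measure.restrict_smul, Measure.restrict_restrict S.simple.1.1.measurableSet,
    Set.inter_self, lintegral_smul_measure, smul_eq_mul]
  exact ENNReal.mul_ne_top ENNReal.ofReal_ne_top
    (hu.2.2.1.setLIntegral_xlogx_ne_top S.simple.1 hx₀ hux₀
      fun _ hF hFP => setLIntegral_facet_ne_top hU hF hFP)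

lemma spf_nonpos (hu : u ∈ MExp S 1) : Spf S u ≤ 0 := by
  obtain ⟨hlsc, -, -, hmean, -⟩ := hu
  have hle := lintegral_ofReal_neg_xlogx_le (ν := S.μ.restrict S.P)
    (aemeasurable_restrict_of_lowerSemicontinuousOn hlsc S.simple.1.1.measurableSet)
    (by rw [hmean, Measure.restrict_apply_univ])
  exact EReal.mul_nonpos_iff.2 (Or.inl
    ⟨EReal.coe_nonneg.2 (inv_nonneg.2 ENNReal.toReal_nonneg),
      EReal.sub_nonpos.2 (EReal.coe_ennreal_le_coe_ennreal_iff.2 hle)⟩)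

lemma spf_ne_bot (hu : u ∈ MExp S 1) (hU : Upf S u ≠ ⊤) : Spf S u ≠ ⊥ := by
  rw [Spf, ← EReal.coe_ennreal_toReal (lintegral_ofReal_neg_xlogx_ne_top u),
    ← EReal.coe_ennreal_toReal (setLIntegral_xlogx_ne_top hu hU), ← EReal.coe_sub, ← EReal.coe_mul]
  exact EReal.coe_ne_bot _

lemma coe_toReal_spf (hu : u ∈ MExp S 1) (hU : Upf S u ≠ ⊤) :
    ((Spf S u).toReal : EReal) = Spf S u :=
  EReal.coe_toReal ((spf_nonpos hu).trans_lt EReal.zero_lt_top).ne (spf_ne_bot hu hU)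

variable (S) in
lemma one_mem_mExp : (fun _ => 1) ∈ MExp S 1 :=
  ⟨lowerSemicontinuousOn_const, fun _ _ => one_pos, fun _ _ _ _ _ _ _ => by simp, by simp,
    by simpa using S.measure_ne_top.lt_top⟩

variable (S) in
lemma upf_one_ne_top : Upf S (fun _ => 1) ≠ ⊤ := by
  rw [Upf, setLIntegral_one]
  exact ENNReal.mul_ne_top (ENNReal.inv_ne_top.2 S.measure_pos.ne') S.boundaryMeasure_ne_top

variable (S) in
lemma spf_one : Spf S (fun _ => 1) = 0 := by
  simp [Spf, xlogx]

lemma fpf_eq_coe (hu : u ∈ MExp S 1) (hU : Upf S u ≠ ⊤) (T : ℝ) :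
    Fpf S T u = ((Upf S u).toReal - T * (Spf S u).toReal : ℝ) := by
  rw [Fpf, if_neg (spf_ne_bot hu hU), EReal.coe_sub, EReal.coe_mul, coe_toReal_spf hu hU,
    EReal.coe_ennreal_toReal hU]

lemma fpf_eq_top (hu : u ∈ MExp S 1) (hU : Upf S u = ⊤) (T : ℝ) : Fpf S T u = ⊤ := by
  obtain hbot | hbot := eq_or_ne (Spf S u) ⊥
  · rw [Fpf, if_pos hbot]
  · have htop : Spf S u ≠ ⊤ := ((spf_nonpos hu).trans_lt EReal.zero_lt_top).ne
    rw [Fpf, if_neg hbot, ← EReal.coe_toReal htop hbot, hU, ← EReal.coe_mul,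
      EReal.coe_ennreal_top, EReal.top_sub_coe]

end NSystem

namespace IsCanonical

open NSystem

variable {n : ℕ} {S : NSystem n} {T : ℝ} {u v : Euc n → ℝ≥0∞}

lemma upf_ne_top (h : IsCanonical S T u) (hT : 0 ≤ T) : Upf S u ≠ ⊤ := by
  obtain rfl | hT := hT.eq_or_lt
  · exact ne_top_of_le_ne_top (upf_one_ne_top S) ((h.2.2 rfl).1 _ (one_mem_mExp S))
  · intro hU
    have hle := h.2.1 hT _ (one_mem_mExp S)
    rw [fpf_eq_top h.1 hU, fpf_eq_coe (one_mem_mExp S) (upf_one_ne_top S)] at hle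
    exact EReal.coe_ne_top _ (top_le_iff.1 hle)

lemma fpf_eq_coe (h : IsCanonical S T u) (hT : 0 ≤ T) :
    Fpf S T u = ((Upf S u).toReal - T * (Spf S u).toReal : ℝ) :=
  NSystem.fpf_eq_coe h.1 (h.upf_ne_top hT) T

lemma coe_toReal_spf (h : IsCanonical S T u) (hT : 0 ≤ T) :
    ((Spf S u).toReal : EReal) = Spf S u :=
  NSystem.coe_toReal_spf h.1 (h.upf_ne_top hT)

lemma toReal_spf_nonpos (h : IsCanonical S T u) (hT : 0 ≤ T) : (Spf S u).toReal ≤ 0 := by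
  have := spf_nonpos h.1
  rw [← h.coe_toReal_spf hT] at this
  exact_mod_cast this

lemma toReal_freeEnergy_le (h : IsCanonical S T u) (hT : 0 ≤ T) (hv : v ∈ MExp S 1)
    (hUv : Upf S v ≠ ⊤) :
    (Upf S u).toReal - T * (Spf S u).toReal ≤ (Upf S v).toReal - T * (Spf S v).toReal := by
  obtain rfl | hT' := hT.eq_or_lt
  · simpa only [zero_mul, sub_zero] using ENNReal.toReal_mono hUv ((h.2.2 rfl).1 v hv)
  · have hle := h.2.1 hT' v hv
    rwa [h.fpf_eq_coe hT, NSystem.fpf_eq_coe hv hUv, EReal.coe_le_coe_iff] at hle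

lemma toReal_freeEnergy_le_upf_one (h : IsCanonical S T u) (hT : 0 ≤ T) :
    (Upf S u).toReal - T * (Spf S u).toReal ≤ (Upf S fun _ => 1).toReal := by
  simpa only [spf_one, EReal.toReal_zero, mul_zero, sub_zero] using
    h.toReal_freeEnergy_le hT (one_mem_mExp S) (upf_one_ne_top S)

lemma isMinOn_toReal_freeEnergy {ucan : ℝ → Euc n → ℝ≥0∞}
    (hcan : ∀ T : ℝ, 0 ≤ T → IsCanonical S T (ucan T)) (T : ℝ) (hT : T ∈ Set.Ici 0) :
    IsMinOn (fun T' => (Upf S (ucan T')).toReal - T * (Spf S (ucan T')).toReal) (Set.Ici 0) T :=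
  isMinOn_iff.2 fun T' hT' =>
    (hcan T hT).toReal_freeEnergy_le hT (hcan T' hT').1 ((hcan T' hT').upf_ne_top hT')

end IsCanonical

end Systems

/-- Monotonicity and concavity along the family of μ-canonical distributions:
`T ↦ F_𝒫(T, u_T^can)` is increasing and concave on `[0,∞)`,
`T ↦ U_𝒫(u_T^can)` and `T ↦ S_𝒫(u_T^can)` are increasing on `[0,∞)`, and
`S_𝒫(u_T^can) → 0` as `T → ∞`. -/
theorem canonical_family_monotone_concave (n : ℕ) (S : NSystem n)
    (ucan : ℝ → Euc n → ℝ≥0∞)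
    (hcan : ∀ T : ℝ, 0 ≤ T → IsCanonical S T (ucan T)) :
    MonotoneOn (fun T => Fpf S T (ucan T)) (Set.Ici (0 : ℝ)) ∧
    (∀ T0 ∈ Set.Ici (0 : ℝ), ∀ T1 ∈ Set.Ici (0 : ℝ), ∀ s : ℝ, 0 ≤ s → s ≤ 1 →
      ((1 - s : ℝ) : EReal) * Fpf S T0 (ucan T0) + ((s : ℝ) : EReal) * Fpf S T1 (ucan T1)
        ≤ Fpf S ((1 - s) * T0 + s * T1) (ucan ((1 - s) * T0 + s * T1))) ∧
    MonotoneOn (fun T => Upf S (ucan T)) (Set.Ici (0 : ℝ)) ∧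
    MonotoneOn (fun T => Spf S (ucan T)) (Set.Ici (0 : ℝ)) ∧
    Tendsto (fun T : ℝ => Spf S (ucan T)) atTop (𝓝 (0 : EReal)) := by
  set U : ℝ → ℝ := fun T => (Upf S (ucan T)).toReal
  set E : ℝ → ℝ := fun T => (Spf S (ucan T)).toReal
  have hU (T) (hT : 0 ≤ T) : Upf S (ucan T) ≠ ⊤ := (hcan T hT).upf_ne_top hT
  have hE (T) (hT : 0 ≤ T) : (E T : EReal) = Spf S (ucan T) := (hcan T hT).coe_toReal_spf hT
  have hF (T) (hT : 0 ≤ T) : ((U T - T * E T : ℝ) : EReal) = Fpf S T (ucan T) :=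
    ((hcan T hT).fpf_eq_coe hT).symm
  have hE0 (T) (hT : 0 ≤ T) : E T ≤ 0 := (hcan T hT).toReal_spf_nonpos hT
  have hmin : ∀ T ∈ Set.Ici 0, IsMinOn (fun T' => U T' - T * E T') (Set.Ici 0) T :=
    IsCanonical.isMinOn_toReal_freeEnergy hcan
  refine ⟨?_, fun T₀ h₀ T₁ h₁ s hs0 hs1 => ?_, fun T hT T' hT' hTT' => ?_, ?_, ?_⟩
  · exact (EReal.coe_strictMono.monotone.comp_monotoneOn
      (monotoneOn_freeEnergy_of_isMinOn hE0 hmin)).congr hF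
  · have hconc := concaveOn_freeEnergy_of_isMinOn (convex_Ici 0) hmin
    have hs : 0 ≤ 1 - s := sub_nonneg.2 hs1
    rw [← hF _ h₀, ← hF _ h₁, ← hF ((1 - s) * T₀ + s * T₁) (hconc.1 h₀ h₁ hs hs0 (by ring))]
    exact_mod_cast hconc.2 h₀ h₁ hs hs0 (sub_add_cancel 1 s)
  · exact (ENNReal.toReal_le_toReal (hU T hT) (hU T' hT')).1
      (monotoneOn_energy_of_isMinOn subset_rfl hmin hT hT' hTT')
  · exact (EReal.coe_strictMono.monotone.comp_monotoneOn
      (monotoneOn_entropy_of_isMinOn hmin)).congr hE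
  · have hnonneg := eventually_ge_atTop (0 : ℝ)
    exact ((continuous_coe_real_ereal.tendsto 0).comp (tendsto_entropy_atTop_of_freeEnergy_le
      (.of_forall fun _ => ENNReal.toReal_nonneg) (hnonneg.mono hE0)
      (hnonneg.mono fun T hT => (hcan T hT).toReal_freeEnergy_le_upf_one hT))).congr'
      (hnonneg.mono hE)

end
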